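/- Let F be a field and L ⊇ F an algebraic field extension. Let f ∈ F[x₁,…,x_d] be square-free in F[x₁,…,x_d], and let h ∈ L[x₁,…,x_d] be irreducible with h² ∣ f in L[x₁,…,x_d]. Let f = f₁⋯f_k be a factorization of f into irreducible factors f_i ∈ F[x₁,…,x_d]. Then there exists an index j, 1 ≤ j ≤ k, such that h² divides f_j in L[x₁,…,x_d]; moreover every variable x_i that occurs in f_j occurs in h. -/

import Mathlib

/-!
Write `f ↦ fᴸ` for extension of scalars. It is flat, so if a prime `p` of `F[x₁,…,x_d]` does not
divide `g`, multiplication by `gᴸ` stays injective modulo `pᴸ`. Consequently `pᴸ` and `gᴸ` can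
share a non-unit factor only if `p ∣ g`.

The prime `h` divides some `f_jᴸ`. It does not divide the product of the other factors, since then
`f_j` would divide that product, against square-freeness; hence all of `h²` divides `f_jᴸ`.
If `x_i` did not occur in `h`, then `h` would divide every coefficient of `f_jᴸ` as a polynomial in
`x_i`, in particular the leading one. So `f_j` would divide its own leading coefficient in `x_i`,
and `x_i` could not occur in `f_j` either.
-/

section Flat

variable {R S M : Type*} [CommRing R] [CommRing S] [Algebra R S]

lemma exists_eq_smul_of_smul_eq_smul [AddCommGroup M] [Module R M] [Module.Flat R M] {p g : R}
    (hp : Prime p) (hpg : ¬ p ∣ g) {x y : M} (hxy : g • x = p • y) : ∃ z : M, x = p • z := by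
  have hrel : ∑ i, ![g, -p] i • ![x, y] i = 0 := by simp [hxy]
  obtain ⟨k, a, z, hz, ha⟩ := Module.Flat.isTrivialRelation_of_sum_smul_eq_zero hrel
  have hdvd (j : Fin k) : p ∣ a 0 j := by
    have hj : g * a 0 j = p * a 1 j := by simpa [← sub_eq_add_neg, sub_eq_zero] using ha j
    exact (hp.dvd_or_dvd ⟨_, hj⟩).resolve_left hpg
  choose b hb using hdvd
  refine ⟨∑ j, b j • z j, ?_⟩
  simpa [hb, mul_smul, Finset.smul_sum] using hz 0

lemma dvd_of_dvd_algebraMap_of_dvd_algebraMap [IsDomain R] [Module.Flat R S] {p g : R}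
    (hp : Prime p) {h : S} (hh : ¬ IsUnit h) (hhp : h ∣ algebraMap R S p)
    (hhg : h ∣ algebraMap R S g) : p ∣ g := by
  by_contra hpg
  obtain ⟨p', hp'⟩ := hhp
  obtain ⟨g', hg'⟩ := hhg
  have hcross : g • p' = p • g' := by
    rw [Algebra.smul_def, Algebra.smul_def, hp', hg']
    ring
  obtain ⟨u, rfl⟩ := exists_eq_smul_of_smul_eq_smul hp hpg hcross
  have hreg : IsSMulRegular S p :=
    Module.Flat.isSMulRegular_of_nonZeroDivisors (mem_nonZeroDivisors_of_ne_zero hp.ne_zero)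
  have hone : p • (h * u) = p • (1 : S) := by
    rw [← mul_smul_comm, ← hp', Algebra.algebraMap_eq_smul_one]
  exact hh (.of_mul_eq_one u (hreg hone))

lemma exists_pow_dvd_algebraMap_of_squarefree_prod [IsDomain R] [IsDomain S] [Module.Flat R S]
    {ι : Type*} {s : Finset ι} {f : ι → R} (hf : ∀ i ∈ s, Prime (f i))
    (hsq : Squarefree (∏ i ∈ s, f i)) {h : S} (hh : Prime h) {n : ℕ} (hn : n ≠ 0)
    (hdvd : h ^ n ∣ algebraMap R S (∏ i ∈ s, f i)) :
    ∃ j ∈ s, h ^ n ∣ algebraMap R S (f j) := by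
  classical
  obtain ⟨j, hj, hhj⟩ : ∃ j ∈ s, h ∣ algebraMap R S (f j) := by
    apply hh.exists_mem_finset_dvd
    rw [← map_prod]
    exact (dvd_pow_self h hn).trans hdvd
  refine ⟨j, hj, ?_⟩
  rw [← Finset.mul_prod_erase s f hj] at hsq hdvd
  have hcofactor : ¬ h ∣ algebraMap R S (∏ i ∈ s.erase j, f i) := fun hrest ↦
    (hf j hj).not_isUnit <| IsRelPrime.of_squarefree_mul hsq dvd_rfl <|
      dvd_of_dvd_algebraMap_of_dvd_algebraMap (hf j hj) hh.not_isUnit hhj hrest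
  rw [map_mul] at hdvd
  exact hh.pow_dvd_of_dvd_mul_right n hcofactor hdvd

end Flat

section UnivariateIn

open MvPolynomial

variable {σ R S : Type*} [DecidableEq σ] [CommSemiring R] [CommSemiring S]

/-- A multivariate polynomial regarded as a univariate polynomial in `X i`, with coefficients in
the polynomial ring in the remaining variables, which are indexed by the subtype `{b // b ≠ i}`. -/
noncomputable def univariateIn (R : Type*) [CommSemiring R] (i : σ) :
    MvPolynomial σ R ≃ₐ[R] Polynomial (MvPolynomial {b // b ≠ i} R) :=
  (renameEquiv R (Equiv.optionSubtypeNe i).symm).trans (optionEquivLeft R _)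

lemma natDegree_univariateIn (i : σ) (p : MvPolynomial σ R) :
    (univariateIn R i p).natDegree = p.degreeOf i :=
  (degreeOf_eq_natDegree i p).symm

lemma univariateIn_X_self (i : σ) : univariateIn R i (X i) = .X := by
  simp [univariateIn]

lemma univariateIn_X_of_ne {i j : σ} (hj : j ≠ i) :
    univariateIn R i (X j) = .C (X ⟨j, hj⟩) := by
  simp [univariateIn, hj]

lemma univariateIn_map (f : R →+* S) (i : σ) (p : MvPolynomial σ R) :
    univariateIn S i (map f p) = (univariateIn R i p).map (map f) := by
  induction p using MvPolynomial.induction_on with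
  | C a => simp [univariateIn]
  | add p q hp hq => simp [hp, hq]
  | mul_X p j hp =>
    rcases eq_or_ne j i with rfl | hj
    · simp [hp, univariateIn_X_self]
    · simp [hp, univariateIn_X_of_ne hj]

end UnivariateIn

section ExtensionOfScalars

open MvPolynomial

lemma exists_degreeOf_eq_zero_and_dvd_map {σ R S : Type*} [CommSemiring R] [CommSemiring S]
    (f : R →+* S) (i : σ) {h : MvPolynomial σ S} (hi : h.degreeOf i = 0) {p : MvPolynomial σ R}
    (hp : p ≠ 0) (hdvd : h ∣ map f p) :
    ∃ q : MvPolynomial σ R, q ≠ 0 ∧ q.degreeOf i = 0 ∧ h ∣ map f q := by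
  classical
  set lead := (univariateIn R i p).leadingCoeff with hlead
  have hlead_ne : lead ≠ 0 := by simpa [hlead] using hp
  refine ⟨(univariateIn R i).symm (.C lead), by simpa using hlead_ne, ?_, ?_⟩
  · simp [← natDegree_univariateIn]
  obtain ⟨c, hc⟩ : ∃ c, univariateIn S i h = .C c :=
    ⟨_, Polynomial.eq_C_of_natDegree_eq_zero (by rw [natDegree_univariateIn, hi])⟩
  have hc_dvd : c ∣ map f lead := by
    have hpoly := map_dvd (univariateIn S i) hdvd
    rw [hc, univariateIn_map, Polynomial.C_dvd_iff_dvd_coeff] at hpoly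
    simpa [hlead] using hpoly (univariateIn R i p).natDegree
  rw [← map_dvd_iff (univariateIn S i), hc, univariateIn_map, AlgEquiv.apply_symm_apply,
    Polynomial.map_C]
  exact map_dvd Polynomial.C hc_dvd

attribute [local instance] algebraMvPolynomial

variable {σ F L : Type*} [CommRing F] [CommRing L] [Algebra F L] [Module.Flat F L]

lemma flat_mvPolynomial : Module.Flat (MvPolynomial σ F) (MvPolynomial σ L) :=
  Module.Flat.isBaseChange F (MvPolynomial σ F) L (MvPolynomial σ L)
    (Algebra.IsPushout.out (R := F) (S := MvPolynomial σ F) (R' := L) (S' := MvPolynomial σ L))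

attribute [local instance] flat_mvPolynomial

lemma degreeOf_pos_of_dvd_map_of_prime [IsDomain F] {p : MvPolynomial σ F} (hp : Prime p)
    {h : MvPolynomial σ L} (hh : ¬ IsUnit h) (hdvd : h ∣ map (algebraMap F L) p) {i : σ}
    (hi : 0 < p.degreeOf i) : 0 < h.degreeOf i := by
  by_contra! hhi
  obtain ⟨q, hq, hqi, hhq⟩ :=
    exists_degreeOf_eq_zero_and_dvd_map _ i (Nat.le_zero.mp hhi) hp.ne_zero hdvd
  obtain ⟨r, rfl⟩ : p ∣ q := dvd_of_dvd_algebraMap_of_dvd_algebraMap hp hh hdvd hhq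
  rw [degreeOf_mul_eq hp.ne_zero (right_ne_zero_of_mul hq)] at hqi
  omega

theorem sq_divisor_in_extension_divides_a_factor_general [IsDomain F] [IsDomain L] {ι : Type*}
    {s : Finset ι} {fs : ι → MvPolynomial σ F} (hfs : ∀ i ∈ s, Prime (fs i))
    (hsq : Squarefree (∏ i ∈ s, fs i)) {h : MvPolynomial σ L} (hh : Prime h) {n : ℕ} (hn : n ≠ 0)
    (hdvd : h ^ n ∣ map (algebraMap F L) (∏ i ∈ s, fs i)) :
    ∃ j ∈ s, h ^ n ∣ map (algebraMap F L) (fs j) ∧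
      ∀ i, 0 < (fs j).degreeOf i → 0 < h.degreeOf i := by
  obtain ⟨j, hj, hpow⟩ := exists_pow_dvd_algebraMap_of_squarefree_prod hfs hsq hh hn hdvd
  exact ⟨j, hj, hpow, fun _ ↦ degreeOf_pos_of_dvd_map_of_prime (hfs j hj) hh.not_isUnit
    ((dvd_pow_self h hn).trans hpow)⟩

end ExtensionOfScalars

/-- Let `L ⊇ F` be an algebraic field extension, `f ∈ F[x₁,…,x_d]`
square-free, and `h ∈ L[x₁,…,x_d]` irreducible with `h² ∣ f` in `L[x₁,…,x_d]`. If
`f = f₁⋯f_k` with each `f_i ∈ F[x₁,…,x_d]` irreducible, then `h²` divides some `f_j` in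
`L[x₁,…,x_d]`, and every variable occurring in that `f_j` occurs in `h`. -/
theorem sq_divisor_in_extension_divides_a_factor (F L : Type*) [Field F] [Field L]
    [Algebra F L] [Algebra.IsAlgebraic F L] (d k : ℕ)
    (f : MvPolynomial (Fin d) F) (hf : Squarefree f)
    (h : MvPolynomial (Fin d) L) (hirr : Irreducible h)
    (hdvd : h ^ 2 ∣ MvPolynomial.map (algebraMap F L) f)
    (fs : Fin k → MvPolynomial (Fin d) F)
    (hfs : ∀ i, Irreducible (fs i)) (hprod : f = ∏ i, fs i) :
    ∃ j : Fin k,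
      h ^ 2 ∣ MvPolynomial.map (algebraMap F L) (fs j) ∧
      ∀ i : Fin d, 0 < MvPolynomial.degreeOf i (fs j) → 0 < MvPolynomial.degreeOf i h := by
  subst hprod
  simpa using sq_divisor_in_extension_divides_a_factor_general (fun i _ ↦ (hfs i).prime) hf
    hirr.prime two_ne_zero hdvd
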